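/- arXiv:1611.00154 — 3 statements merged into one kernel-verified Lean document; each statement's English description precedes it below -/
import Mathlib

section
/- Under the stated assumptions, for every pair of continuous linear functionals f_R : R → ℝ and f_S : S → ℝ, the mixed system: find (u, φ, ζ) ∈ R × S × Y such that a_R(u, v) + b(v, φ) + c(B v, ζ) = f_R(v) for all v ∈ R, b(u, ψ) + a_S(φ, ψ) − c(ι ψ, ζ) = f_S(ψ) for all ψ ∈ S, and c(B u − ι φ, η) = 0 for all η ∈ Y, admits exactly one solution (u, φ, ζ). Moreover there exist constants C₁, C₂ > 0, independent of f_R and f_S, such that C₁(‖f_R‖_{R'} + ‖f_S‖_{S'}) ≤ ‖u‖_R + ‖φ‖_S + ‖ζ‖_Y ≤ C₂(‖f_R‖_{R'} + ‖f_S‖_{S'}). Furthermore u ∈ W with B u = ι φ, and u solves the primal problem: a_R(u, v) + b(u, s_v) + b(v, φ) + a_S(φ, s_v) = f_R(v) + f_S(s_v) for all v ∈ W. (Paper's Theorem 2.1.) -/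
/-- Membership in the sum space `Y = B(R) + ι(S) ⊆ H`. -/
def memY
    {R S H : Type*}
    [NormedAddCommGroup R] [InnerProductSpace ℝ R]
    [NormedAddCommGroup S] [InnerProductSpace ℝ S]
    [NormedAddCommGroup H] [InnerProductSpace ℝ H]
    (B : R →L[ℝ] H) (ι : S →L[ℝ] H) (y : H) : Prop :=
  ∃ (r : R) (s : S), y = B r + ι s

/-- The sum-space norm `‖y‖_Y = inf {‖B r‖_H + ‖s‖_S | y = B r + ι s}` on
`Y = B(R) + ι(S)`. -/
noncomputable def normY
    {R S H : Type*}
    [NormedAddCommGroup R] [InnerProductSpace ℝ R]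
    [NormedAddCommGroup S] [InnerProductSpace ℝ S]
    [NormedAddCommGroup H] [InnerProductSpace ℝ H]
    (B : R →L[ℝ] H) (ι : S →L[ℝ] H) (y : H) : ℝ :=
  sInf {t : ℝ | ∃ (r : R) (s : S), y = B r + ι s ∧ t = ‖B r‖ + ‖s‖}

/-- Lax-Milgram on a closed subspace. -/
theorem lm_subspace {X : Type*} [NormedAddCommGroup X] [InnerProductSpace ℝ X] [CompleteSpace X]
    (A : X →L[ℝ] X →L[ℝ] ℝ) (K : Submodule ℝ X) (hK : IsClosed (K : Set X)) (κ : ℝ) (hκ : 0 < κ)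
    (hA : ∀ x ∈ K, κ * ‖x‖ ^ 2 ≤ A x x) (F : X →L[ℝ] ℝ) :
    ∃ p ∈ K, (∀ x ∈ K, A p x = F x) ∧ ‖p‖ ≤ κ⁻¹ * ‖F‖ := by
  haveI : CompleteSpace K := hK.completeSpace_coe
  have hco : IsCoercive (A.bilinearComp K.subtypeL K.subtypeL) := by
    refine ⟨κ, hκ, fun u => ?_⟩
    have := hA u u.2
    simp only [ContinuousLinearMap.bilinearComp_apply, Submodule.subtypeL_apply,
      Submodule.coe_norm] at *
    nlinarith
  let g : K := (InnerProductSpace.toDual ℝ K).symm (F.comp K.subtypeL)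
  let q : K := hco.continuousLinearEquivOfBilin.symm g
  have hq : ∀ x ∈ K, A q x = F x := by
    intro x hx
    have h1 := hco.continuousLinearEquivOfBilin_apply q ⟨x, hx⟩
    have h2 : hco.continuousLinearEquivOfBilin q = g :=
      hco.continuousLinearEquivOfBilin.apply_symm_apply g
    rw [h2] at h1
    have h3 : inner ℝ g ⟨x, hx⟩ = F x := by
      simp [g]
    rw [h3] at h1
    simpa using h1.symm
  refine ⟨q, q.2, hq, ?_⟩
  have h1 := hA q q.2
  rw [hq q q.2] at h1
  have h2 : F q ≤ ‖F‖ * ‖(q : X)‖ := le_trans (le_abs_self _) (F.le_opNorm q)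
  rw [inv_mul_eq_div, le_div_iff₀ hκ]
  rcases eq_or_lt_of_le (norm_nonneg (q : X)) with h | h
  · rw [← h]; simp
  · refine le_of_mul_le_mul_right ?_ h
    nlinarith

theorem saddle_abstract {X : Type*} [NormedAddCommGroup X] [InnerProductSpace ℝ X]
    [CompleteSpace X] (A C : X →L[ℝ] X →L[ℝ] ℝ) (K : Submodule ℝ X) (hK : IsClosed (K : Set X))
    (κ : ℝ) (hκ : 0 < κ) (hA : ∀ x ∈ K, κ * ‖x‖ ^ 2 ≤ A x x)
    (γ : ℝ) (hγ : 0 < γ) (hC : ∀ x ∈ Kᗮ, γ * ‖x‖ ^ 2 ≤ C x x)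
    (hCK : ∀ z, ∀ x ∈ K, C z x = 0) :
    ∃ D : ℝ, 0 < D ∧ ∀ F : X →L[ℝ] ℝ, ∃ p ∈ K, ∃ z ∈ Kᗮ,
      (∀ x, A p x + C z x = F x) ∧ ‖p‖ + ‖z‖ ≤ D * ‖F‖ := by
  haveI : CompleteSpace K := hK.completeSpace_coe
  refine ⟨κ⁻¹ + γ⁻¹ * (1 + ‖A‖ * κ⁻¹), by positivity, fun F => ?_⟩
  obtain ⟨p, hpK, hp, hpn⟩ := lm_subspace A K hK κ hκ hA F
  obtain ⟨z, hzK, hz, hzn⟩ := lm_subspace C Kᗮ K.isClosed_orthogonal γ hγ hC (F - A p)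
  refine ⟨p, hpK, z, hzK, fun x => ?_, ?_⟩
  · obtain ⟨k, hk, l, hl, rfl⟩ := K.exists_add_mem_mem_orthogonal x
    have h1 := hp k hk
    have h2 := hz l hl
    have h3 := hCK z k hk
    simp only [ContinuousLinearMap.sub_apply] at h2
    simp only [map_add]
    linarith
  · have h1 : ‖F - A p‖ ≤ (1 + ‖A‖ * κ⁻¹) * ‖F‖ := by
      have h2 := norm_sub_le F (A p)
      have h3 := A.le_opNorm p
      have h4 := mul_le_mul_of_nonneg_left hpn (norm_nonneg A)
      nlinarith
    have h5 := mul_le_mul_of_nonneg_left h1 (inv_pos.2 hγ).le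
    nlinarith

theorem closed_range_preimage {R H : Type*}
    [NormedAddCommGroup R] [InnerProductSpace ℝ R] [CompleteSpace R]
    [NormedAddCommGroup H] [InnerProductSpace ℝ H] [CompleteSpace H]
    (B : R →L[ℝ] H) (hBR : IsClosed (Set.range B)) :
    ∃ Q : ℝ, 0 < Q ∧ ∀ r, ∃ r', B r' = B r ∧ ‖r'‖ ≤ Q * ‖B r‖ := by
  let V : Submodule ℝ H := LinearMap.range (B : R →ₗ[ℝ] H)
  have hV : IsClosed (V : Set H) := by
    convert hBR using 1
    ext; simp [V]
  haveI : CompleteSpace V := hV.completeSpace_coe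
  let B' : R →L[ℝ] V := B.codRestrict V (fun x => ⟨x, rfl⟩)
  have hs : Function.Surjective B' := by
    rintro ⟨y, x, rfl⟩
    exact ⟨x, rfl⟩
  obtain ⟨Q, hQ, h⟩ := B'.exists_preimage_norm_le hs
  refine ⟨Q, hQ, fun r => ?_⟩
  obtain ⟨x, hx, hxn⟩ := h (B' r)
  exact ⟨x, congrArg Subtype.val hx, hxn⟩

theorem normY_nonneg' {R S H : Type*}
    [NormedAddCommGroup R] [InnerProductSpace ℝ R]
    [NormedAddCommGroup S] [InnerProductSpace ℝ S]
    [NormedAddCommGroup H] [InnerProductSpace ℝ H]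
    (B : R →L[ℝ] H) (ι : S →L[ℝ] H) (y : H) : 0 ≤ normY B ι y := by
  apply Real.sInf_nonneg
  rintro t ⟨r, s, -, rfl⟩
  positivity

theorem normY_le' {R S H : Type*}
    [NormedAddCommGroup R] [InnerProductSpace ℝ R]
    [NormedAddCommGroup S] [InnerProductSpace ℝ S]
    [NormedAddCommGroup H] [InnerProductSpace ℝ H]
    (B : R →L[ℝ] H) (ι : S →L[ℝ] H) (y : H) (r : R) (s : S) (h : y = B r + ι s) :
    normY B ι y ≤ ‖B r‖ + ‖s‖ := by
  apply csInf_le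
  · refine ⟨0, ?_⟩
    rintro t ⟨r, s, -, rfl⟩
    positivity
  · exact ⟨r, s, h, rfl⟩

/-- Paper's Theorem 2.1.  Under the configurable-triple assumptions (with `B(R)` closed),
bounded symmetric positive-semidefinite forms `a_R`, `a_S`, a bounded form `b` whose sum
`a` is coercive on `W`, and a form `c` equivalent to an inner product on `Y`, the mixed
system (2.9) has, for every `f_R ∈ R'`, `f_S ∈ S'`, a unique solution `(u, φ, ζ)`, with
two-sided stability `‖u‖_R + ‖φ‖_S + ‖ζ‖_Y ≂ ‖f_R‖_{R'} + ‖f_S‖_{S'}`; moreover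
`B u = ι φ` and `u` solves the primal problem. -/
theorem mixed_system_wellposed
    {R S H : Type*}
    [NormedAddCommGroup R] [InnerProductSpace ℝ R] [CompleteSpace R]
    [NormedAddCommGroup S] [InnerProductSpace ℝ S] [CompleteSpace S]
    [NormedAddCommGroup H] [InnerProductSpace ℝ H] [CompleteSpace H]
    (ι : S →L[ℝ] H) (hι : Function.Injective ι)
    (B : R →L[ℝ] H) (hBR : IsClosed (Set.range B))
    -- the bounded symmetric positive-semidefinite bilinear forms a_R, a_S and bounded b
    (aR : R →L[ℝ] R →L[ℝ] ℝ) (haRsymm : ∀ u v : R, aR u v = aR v u)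
    (haRpos : ∀ u : R, 0 ≤ aR u u)
    (aS : S →L[ℝ] S →L[ℝ] ℝ) (haSsymm : ∀ u v : S, aS u v = aS v u)
    (haSpos : ∀ u : S, 0 ≤ aS u u)
    (b : R →L[ℝ] S →L[ℝ] ℝ)
    -- coercivity of a(v, v) = a_R(v,v) + 2 b(v, s_v) + a_S(s_v, s_v) on W
    (α : ℝ) (hα : 0 < α)
    (hcoerW : ∀ (v : R) (sv : S), ι sv = B v →
      α * (‖v‖ + ‖sv‖) ^ 2 ≤ aR v v + 2 * b v sv + aS sv sv)
    -- c : an inner product on Y with norm equivalent to ‖·‖_Y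
    (c : H → H → ℝ) (m M : ℝ) (hm : 0 < m) (hmM : m ≤ M)
    (hcsymm : ∀ y z : H, memY B ι y → memY B ι z → c y z = c z y)
    (hcadd : ∀ y₁ y₂ z : H, memY B ι y₁ → memY B ι y₂ → memY B ι z →
      c (y₁ + y₂) z = c y₁ z + c y₂ z)
    (hcsmul : ∀ (a : ℝ) (y z : H), memY B ι y → memY B ι z → c (a • y) z = a * c y z)
    (hccoer : ∀ y : H, memY B ι y → m * (normY B ι y) ^ 2 ≤ c y y)
    (hcbdd : ∀ y z : H, memY B ι y → memY B ι z →
      |c y z| ≤ M * normY B ι y * normY B ι z) :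
    ∃ C₁ : ℝ, 0 < C₁ ∧ ∃ C₂ : ℝ, 0 < C₂ ∧
      ∀ (fR : R →L[ℝ] ℝ) (fS : S →L[ℝ] ℝ),
        ∃ (u : R) (φ : S) (ζ : H),
          -- (u, φ, ζ) solves the mixed system, with ζ ∈ Y
          (memY B ι ζ ∧
            (∀ v : R, aR u v + b v φ + c (B v) ζ = fR v) ∧
            (∀ ψ : S, b u ψ + aS φ ψ - c (ι ψ) ζ = fS ψ) ∧
            (∀ η : H, memY B ι η → c (B u - ι φ) η = 0)) ∧
          -- uniqueness
          (∀ (u' : R) (φ' : S) (ζ' : H), memY B ι ζ' →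
            (∀ v : R, aR u' v + b v φ' + c (B v) ζ' = fR v) →
            (∀ ψ : S, b u' ψ + aS φ' ψ - c (ι ψ) ζ' = fS ψ) →
            (∀ η : H, memY B ι η → c (B u' - ι φ') η = 0) →
            u' = u ∧ φ' = φ ∧ ζ' = ζ) ∧
          -- two-sided stability
          C₁ * (‖fR‖ + ‖fS‖) ≤ ‖u‖ + ‖φ‖ + normY B ι ζ ∧
          ‖u‖ + ‖φ‖ + normY B ι ζ ≤ C₂ * (‖fR‖ + ‖fS‖) ∧
          -- u ∈ W with B u = ι φ and u solves the primal problem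
          ι φ = B u ∧
          (∀ (v : R) (sv : S), ι sv = B v →
            aR u v + b u sv + b v φ + aS φ sv = fR v + fS sv) := by
  classical
  have hM : 0 < M := lt_of_lt_of_le hm hmM
  -- the product Hilbert space
  let X := WithLp 2 (R × S)
  let p1 : X →L[ℝ] R := WithLp.fstL 2 ℝ R S
  let p2 : X →L[ℝ] S := WithLp.sndL 2 ℝ R S
  have hsq : ∀ x : X, ‖x‖ ^ 2 = ‖p1 x‖ ^ 2 + ‖p2 x‖ ^ 2 := fun x =>
    WithLp.prod_norm_sq_eq_of_L2 x
  have hmk : ∀ (r : R) (s : S), ∃ x : X, p1 x = r ∧ p2 x = s := fun r s =>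
    ⟨WithLp.toLp 2 (r, s), rfl, rfl⟩
  have hn1 : ∀ x : X, ‖p1 x‖ ≤ ‖x‖ := fun x => by
    apply le_of_sq_le_sq _ (norm_nonneg _)
    rw [hsq]; nlinarith [sq_nonneg ‖p2 x‖]
  have hn2 : ∀ x : X, ‖p2 x‖ ≤ ‖x‖ := fun x => by
    apply le_of_sq_le_sq _ (norm_nonneg _)
    rw [hsq]; nlinarith [sq_nonneg ‖p1 x‖]
  have hn12 : ∀ x : X, ‖x‖ ≤ ‖p1 x‖ + ‖p2 x‖ := fun x => by
    apply le_of_sq_le_sq _ (by positivity)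
    rw [hsq]; nlinarith [mul_nonneg (norm_nonneg (p1 x)) (norm_nonneg (p2 x))]
  let T : X →L[ℝ] H := B.comp p1 - ι.comp p2
  have hT : ∀ x, T x = B (p1 x) - ι (p2 x) := fun x => rfl
  have hmT : ∀ x, memY B ι (T x) := fun x => ⟨p1 x, -p2 x, by rw [hT, map_neg, sub_eq_add_neg]⟩
  have hTm : ∀ y, memY B ι y → ∃ x, T x = y := by
    rintro y ⟨r, s, rfl⟩
    obtain ⟨x, h1, h2⟩ := hmk r (-s)
    exact ⟨x, by rw [hT, h1, h2, map_neg, sub_neg_eq_add]⟩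
  have hNT : ∀ x, normY B ι (T x) ≤ (‖B‖ + 1) * ‖x‖ := fun x => by
    have h1 := normY_le' B ι (T x) (p1 x) (-p2 x) (by rw [hT, map_neg, sub_eq_add_neg])
    rw [norm_neg] at h1
    have h2 := B.le_opNorm (p1 x)
    have h3 := mul_le_mul_of_nonneg_left (hn1 x) (norm_nonneg B)
    linarith [hn2 x]
  have hN0 := normY_nonneg' B ι
  -- kernel
  let K : Submodule ℝ X := LinearMap.ker (T : X →ₗ[ℝ] H)
  have hKm : ∀ x, x ∈ K ↔ T x = 0 := fun x => Iff.rfl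
  have hK : IsClosed (K : Set X) := T.isClosed_ker
  haveI : CompleteSpace K := hK.completeSpace_coe
  -- the form a
  let A : X →L[ℝ] X →L[ℝ] ℝ := aR.bilinearComp p1 p1 + b.bilinearComp p1 p2 +
    b.flip.bilinearComp p2 p1 + aS.bilinearComp p2 p2
  have hA : ∀ x y, A x y = aR (p1 x) (p1 y) + b (p1 x) (p2 y) + b (p1 y) (p2 x) +
    aS (p2 x) (p2 y) := fun x y => rfl
  have hAK : ∀ x ∈ K, α * ‖x‖ ^ 2 ≤ A x x := by
    intro x hx
    have h0 : ι (p2 x) = B (p1 x) := by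
      have := (hKm x).1 hx
      rw [hT, sub_eq_zero] at this
      exact this.symm
    have h1 := hcoerW (p1 x) (p2 x) h0
    have h2 : ‖x‖ ^ 2 ≤ (‖p1 x‖ + ‖p2 x‖) ^ 2 := pow_le_pow_left₀ (norm_nonneg _) (hn12 x) 2
    have h3 := mul_le_mul_of_nonneg_left h2 hα.le
    rw [hA]; linarith
  -- the form c
  have hcaddr : ∀ y z₁ z₂ : H, memY B ι y → memY B ι z₁ → memY B ι z₂ →
      c y (z₁ + z₂) = c y z₁ + c y z₂ := by
    intro y z₁ z₂ hy h1 h2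
    have h12 : memY B ι (z₁ + z₂) := by
      obtain ⟨x1, rfl⟩ := hTm _ h1
      obtain ⟨x2, rfl⟩ := hTm _ h2
      rw [← map_add]; exact hmT _
    rw [hcsymm _ _ hy h12, hcadd _ _ _ h1 h2 hy, hcsymm _ _ h1 hy, hcsymm _ _ h2 hy]
  have hcsmulr : ∀ (a : ℝ) (y z : H), memY B ι y → memY B ι z → c y (a • z) = a * c y z := by
    intro a y z hy hz
    have h12 : memY B ι (a • z) := by
      obtain ⟨x1, rfl⟩ := hTm _ hz
      rw [← map_smul]; exact hmT _
    rw [hcsymm _ _ hy h12, hcsmul _ _ _ hz hy, hcsymm _ _ hz hy]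
  have hc0 : ∀ y, memY B ι y → c y 0 = 0 := by
    intro y hy
    have := hcsmulr 0 y y hy hy
    simpa using this
  let C0 : X →ₗ[ℝ] X →ₗ[ℝ] ℝ := LinearMap.mk₂ ℝ (fun x y => c (T x) (T y))
    (fun x y z => by rw [map_add]; exact hcadd _ _ _ (hmT _) (hmT _) (hmT _))
    (fun a x y => by rw [map_smul]; exact hcsmul _ _ _ (hmT _) (hmT _))
    (fun x y z => by rw [map_add]; exact hcaddr _ _ _ (hmT _) (hmT _) (hmT _))
    (fun a x y => by rw [map_smul]; exact hcsmulr _ _ _ (hmT _) (hmT _))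
  let C : X →L[ℝ] X →L[ℝ] ℝ := C0.mkContinuous₂ (M * (‖B‖ + 1) * (‖B‖ + 1)) (by
    intro x y
    change |c (T x) (T y)| ≤ _
    refine (hcbdd _ _ (hmT x) (hmT y)).trans ?_
    have h1 := mul_le_mul (hNT x) (hNT y) (hN0 _) (by positivity)
    have h2 := mul_le_mul_of_nonneg_left h1 hM.le
    linarith)
  have hC : ∀ x y, C x y = c (T x) (T y) := fun x y => rfl
  obtain ⟨Q, hQ, hpre⟩ := closed_range_preimage B hBR
  have hlow : ∀ x ∈ Kᗮ, ‖x‖ ≤ (Q + 1) * normY B ι (T x) := by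
    intro x hx
    rw [← div_le_iff₀' (by positivity)]
    refine le_csInf ?_ ?_
    · obtain ⟨r, s, h⟩ := hmT x
      exact ⟨_, r, s, h, rfl⟩
    · rintro t ⟨r, s, h, rfl⟩
      rw [div_le_iff₀' (by positivity)]
      obtain ⟨r', hr', hrn⟩ := hpre r
      obtain ⟨w, hw1, hw2⟩ := hmk r' (-s)
      have hwx : w - x ∈ K := by
        rw [hKm, map_sub, h, hT, hw1, hw2, hr', map_neg]; abel
      have horth : inner ℝ (w - x) x = 0 := hx _ hwx
      have hxw : ‖x‖ ≤ ‖w‖ := by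
        have h1 : inner ℝ w x = ‖x‖ ^ 2 := by
          rw [inner_sub_left, real_inner_self_eq_norm_sq] at horth; linarith
        have h2 := real_inner_le_norm w x
        by_contra! hlt
        nlinarith [norm_nonneg w]
      have h3 := hn12 w
      rw [hw1, hw2, norm_neg] at h3
      nlinarith [norm_nonneg s, norm_nonneg (B r)]
  have hCK : ∀ x ∈ Kᗮ, (m / (Q + 1) ^ 2) * ‖x‖ ^ 2 ≤ C x x := by
    intro x hx
    have h1 := hccoer _ (hmT x)
    have h2 := pow_le_pow_left₀ (norm_nonneg _) (hlow x hx) 2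
    rw [hC, div_mul_eq_mul_div, div_le_iff₀ (by positivity)]
    rw [mul_pow] at h2
    have h3 := mul_le_mul_of_nonneg_left h2 hm.le
    have h4 := mul_le_mul_of_nonneg_right h1 (sq_nonneg (Q + 1))
    linarith
  have hCz : ∀ z, ∀ x ∈ K, C z x = 0 := by
    intro z x hx
    rw [hC, (hKm x).1 hx]
    exact hc0 _ (hmT z)
  have hdef : ∀ y, memY B ι y → c y y = 0 → y = 0 := by
    intro y hy h
    obtain ⟨x, rfl⟩ := hTm y hy
    obtain ⟨k, hk, l, hl, rfl⟩ := K.exists_add_mem_mem_orthogonal x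
    have e : T (k + l) = T l := by rw [map_add, (hKm k).1 hk, zero_add]
    rw [e] at h ⊢
    have h1 := hCK l hl
    rw [hC, h] at h1
    have h2 : ‖l‖ ^ 2 ≤ 0 := by
      by_contra! h3
      have : 0 < m / (Q + 1) ^ 2 * ‖l‖ ^ 2 := by positivity
      linarith
    have h3 : ‖l‖ = 0 := by
      have := sq_nonneg ‖l‖
      exact pow_eq_zero_iff (two_ne_zero) |>.1 (le_antisymm h2 this)
    rw [norm_eq_zero.1 h3, map_zero]
  obtain ⟨D, hD, hsol⟩ := saddle_abstract A C K hK α hα hAK _ (by positivity) hCK hCz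
  have hmB : ∀ v, memY B ι (B v) := fun v => ⟨v, 0, by simp⟩
  have hmι : ∀ s, memY B ι (ι s) := fun s => ⟨0, s, by simp⟩
  have hCexp : ∀ z x, C z x = c (B (p1 x)) (T z) - c (ι (p2 x)) (T z) := by
    intro z x
    have hneg : memY B ι ((-1 : ℝ) • ι (p2 x)) := ⟨0, -p2 x, by simp⟩
    rw [hC, hcsymm _ _ (hmT z) (hmT x)]
    have e : T x = B (p1 x) + (-1 : ℝ) • ι (p2 x) := by rw [hT]; simp [sub_eq_add_neg]
    rw [e, hcadd _ _ _ (hmB _) hneg (hmT z), hcsmul _ _ _ (hmι _) (hmT z)]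
    ring
  have hcz : ∀ y, memY B ι y → c 0 y = 0 := by
    intro y hy
    have := hcsmul 0 y y hy hy
    simpa using this
  let L : ℝ := ‖aR‖ + ‖aS‖ + 2 * ‖b‖ + M * ‖B‖ + M
  have hL : 0 < L := by positivity
  refine ⟨L⁻¹, inv_pos.2 hL, (‖B‖ + 3) * D, by positivity, fun fR fS => ?_⟩
  let F : X →L[ℝ] ℝ := fR.comp p1 + fS.comp p2
  have hF : ∀ x, F x = fR (p1 x) + fS (p2 x) := fun x => rfl
  have hFn : ‖F‖ ≤ ‖fR‖ + ‖fS‖ := by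
    refine F.opNorm_le_bound (by positivity) (fun x => ?_)
    rw [hF]
    have h1 := norm_add_le (fR (p1 x)) (fS (p2 x))
    have h2 := fR.le_opNorm_of_le (hn1 x)
    have h3 := fS.le_opNorm_of_le (hn2 x)
    linarith
  obtain ⟨p, hpK, z, hzK, hpz, hbd⟩ := hsol F
  have hker : ι (p2 p) = B (p1 p) := by
    have := (hKm p).1 hpK
    rw [hT, sub_eq_zero] at this
    exact this.symm
  have e1 : ∀ v : R, aR (p1 p) v + b v (p2 p) + c (B v) (T z) = fR v := by
    intro v
    obtain ⟨x, h1, h2⟩ := hmk v 0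
    have h := hpz x
    rw [hA, hCexp, hF, h1, h2] at h
    simp only [map_zero, hcz _ (hmT z)] at h
    linarith
  have e2 : ∀ ψ : S, b (p1 p) ψ + aS (p2 p) ψ - c (ι ψ) (T z) = fS ψ := by
    intro ψ
    obtain ⟨x, h1, h2⟩ := hmk 0 ψ
    have h := hpz x
    rw [hA, hCexp, hF, h1, h2] at h
    simp only [map_zero, hcz _ (hmT z), ContinuousLinearMap.zero_apply] at h
    linarith
  refine ⟨p1 p, p2 p, T z, ⟨hmT z, e1, e2, ?_⟩, ?_, ?_, ?_, hker, ?_⟩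
  · intro η hη
    rw [hker, sub_self]
    exact hcz _ hη
  · intro u' φ' ζ' hζ' h1 h2 h3
    obtain ⟨q, rfl, rfl⟩ := hmk u' φ'
    obtain ⟨z', rfl⟩ := hTm ζ' hζ'
    have hqK : q ∈ K := (hKm q).2 (hdef _ (hmT q) (h3 _ (hmT q)))
    have hq : ∀ x, A q x + C z' x = F x := by
      intro x
      rw [hA, hCexp, hF]
      linarith [h1 (p1 x), h2 (p2 x)]
    have hd : ∀ x, A (q - p) x + C (z' - z) x = 0 := by
      intro x
      simp only [map_sub, ContinuousLinearMap.sub_apply]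
      linarith [hq x, hpz x]
    have hdK : q - p ∈ K := K.sub_mem hqK hpK
    have hqp : q = p := by
      have h4 := hd (q - p)
      rw [hCz _ _ hdK] at h4
      have h5 := hAK _ hdK
      have h6 : ‖q - p‖ ^ 2 ≤ 0 := by
        by_contra! h7
        have := mul_pos hα h7
        linarith
      have h7 : ‖q - p‖ = 0 :=
        pow_eq_zero_iff two_ne_zero |>.1 (le_antisymm h6 (sq_nonneg _))
      exact sub_eq_zero.1 (norm_eq_zero.1 h7)
    refine ⟨by rw [hqp], by rw [hqp], ?_⟩
    have h4 := hd (z' - z)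
    rw [hqp, sub_self, map_zero, ContinuousLinearMap.zero_apply, zero_add, hC] at h4
    have h5 := hdef _ (hmT _) h4
    rw [map_sub] at h5
    exact sub_eq_zero.1 h5
  · rw [inv_mul_le_iff₀ hL]
    have hN := hN0 (T z)
    have g1 : ‖fR‖ ≤ ‖aR‖ * ‖p1 p‖ + ‖b‖ * ‖p2 p‖ + M * ‖B‖ * normY B ι (T z) := by
      refine fR.opNorm_le_bound (by positivity) (fun v => ?_)
      rw [← e1 v]
      have k1 := aR.le_opNorm₂ (p1 p) v
      have k2 := b.le_opNorm₂ v (p2 p)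
      have k3 := hcbdd _ _ (hmB v) (hmT z)
      have k4 : normY B ι (B v) ≤ ‖B‖ * ‖v‖ := by
        have := normY_le' B ι (B v) v 0 (by simp)
        rw [norm_zero, add_zero] at this
        exact this.trans (B.le_opNorm v)
      have k5 := mul_le_mul_of_nonneg_right (mul_le_mul_of_nonneg_left k4 hM.le) hN
      have k6 := norm_add₃_le (a := aR (p1 p) v) (b := b v (p2 p)) (c := c (B v) (T z))
      rw [Real.norm_eq_abs (c _ _)] at k6
      linarith
    have g2 : ‖fS‖ ≤ ‖b‖ * ‖p1 p‖ + ‖aS‖ * ‖p2 p‖ + M * normY B ι (T z) := by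
      refine fS.opNorm_le_bound (by positivity) (fun ψ => ?_)
      rw [← e2 ψ]
      have k1 := aS.le_opNorm₂ (p2 p) ψ
      have k2 := b.le_opNorm₂ (p1 p) ψ
      have k3 := hcbdd _ _ (hmι ψ) (hmT z)
      have k4 : normY B ι (ι ψ) ≤ ‖ψ‖ := by
        have := normY_le' B ι (ι ψ) 0 ψ (by simp)
        simpa using this
      have k5 := mul_le_mul_of_nonneg_right (mul_le_mul_of_nonneg_left k4 hM.le) hN
      have k6 := norm_sub_le (b (p1 p) ψ + aS (p2 p) ψ) (c (ι ψ) (T z))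
      have k7 := norm_add_le (b (p1 p) ψ) (aS (p2 p) ψ)
      rw [Real.norm_eq_abs (c _ _)] at k6
      linarith
    have n1 := norm_nonneg (p1 p)
    have n2 := norm_nonneg (p2 p)
    have t1 : 0 ≤ (‖aS‖ + ‖b‖ + M * ‖B‖ + M) * ‖p1 p‖ := by positivity
    have t2 : 0 ≤ (‖aR‖ + ‖b‖ + M * ‖B‖ + M) * ‖p2 p‖ := by positivity
    have t3 : 0 ≤ (‖aR‖ + ‖aS‖ + 2 * ‖b‖) * normY B ι (T z) := by positivity
    have : L = ‖aR‖ + ‖aS‖ + 2 * ‖b‖ + M * ‖B‖ + M := rfl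
    rw [this]
    linarith
  · have h1 := hn1 p
    have h2 := hn2 p
    have h3 := hNT z
    have h4 := mul_le_mul_of_nonneg_left hFn hD.le
    have h5 := mul_le_mul_of_nonneg_left (hbd.trans h4) (by positivity : 0 ≤ ‖B‖ + 3)
    have t1 : 0 ≤ (‖B‖ + 1) * ‖p‖ := by positivity
    have t2 := norm_nonneg z
    linarith
  · intro v sv hv
    have h1 := e1 v
    have h2 := e2 sv
    rw [hv] at h2
    linarith
end

section
/- For every ρ ≥ 1 there exists a constant C(ρ) > 0 such that for every nondegenerate tetrahedron K ⊂ ℝ³ that is shape-regular with parameter ρ (i.e., h_K ≤ ρ · r_K), every affine function p : ℝ³ → ℝ, and every q ∈ P^e(K) (the span of the six products λᵢλⱼ, 1 ≤ i ≠ j ≤ 4, of barycentric coordinate functions), one has ∫_K ‖∇(p + q)‖² ≥ C(ρ) ( ∫_K ‖∇p‖² + h_K⁻² ∫_K |q|² ). (The per-tetrahedron inequality proved in the paper's Lemma 3.7, edge-bubble case.) -/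
open MeasureTheory


lemma ebss_mean (g : EuclideanSpace ℝ (Fin 3) →L[ℝ] ℝ) (A : EuclideanSpace ℝ (Fin 3) →L[ℝ] (EuclideanSpace ℝ (Fin 3) →L[ℝ] ℝ)) (z : EuclideanSpace ℝ (Fin 3)) (t : ℝ) :
    volume.real (Metric.closedBall z t) * ‖g + A z‖ ^ 2 ≤
      ∫ x in Metric.closedBall z t, ‖g + A x‖ ^ 2 := by
  have hcont : Continuous (fun x : EuclideanSpace ℝ (Fin 3) => ‖g + A x‖ ^ 2) := by fun_prop
  have hcont2 : Continuous (fun x : EuclideanSpace ℝ (Fin 3) => ‖g + A ((z + z) - x)‖ ^ 2) := by fun_prop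
  have hK : IsCompact (Metric.closedBall z t) := isCompact_closedBall z t
  have hi1 : IntegrableOn (fun x : EuclideanSpace ℝ (Fin 3) => ‖g + A x‖ ^ 2) (Metric.closedBall z t) volume :=
    hcont.continuousOn.integrableOn_compact hK
  have hi2 : IntegrableOn (fun x : EuclideanSpace ℝ (Fin 3) => ‖g + A ((z + z) - x)‖ ^ 2)
      (Metric.closedBall z t) volume :=
    hcont2.continuousOn.integrableOn_compact hK
  have hrefl : ∫ x in Metric.closedBall z t, ‖g + A ((z + z) - x)‖ ^ 2 =
      ∫ x in Metric.closedBall z t, ‖g + A x‖ ^ 2 := by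
    have hmp : MeasurePreserving (fun x : EuclideanSpace ℝ (Fin 3) => (z + z) - x) volume volume :=
      Measure.measurePreserving_sub_left volume (z + z)
    have hemb : MeasurableEmbedding (fun x : EuclideanSpace ℝ (Fin 3) => (z + z) - x) :=
      (Homeomorph.subLeft (z + z)).measurableEmbedding
    have := hmp.setIntegral_preimage_emb hemb (fun x : EuclideanSpace ℝ (Fin 3) => ‖g + A x‖ ^ 2)
      (Metric.closedBall z t)
    rw [← this]
    congr 2
    ext x
    simp only [Metric.mem_closedBall, Set.mem_preimage, dist_eq_norm]
    rw [show z + z - x - z = -(x - z) by abel, norm_neg]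
  have hpt : ∀ x : EuclideanSpace ℝ (Fin 3), 2 * ‖g + A z‖ ^ 2 ≤ ‖g + A x‖ ^ 2 + ‖g + A ((z + z) - x)‖ ^ 2 := by
    intro x
    have h1 : (2 : ℝ) • (g + A z) = (g + A x) + (g + A ((z + z) - x)) := by
      rw [map_sub, map_add, two_smul]; abel
    have h2 : 2 * ‖g + A z‖ ≤ ‖g + A x‖ + ‖g + A ((z + z) - x)‖ := by
      have := norm_add_le (g + A x) (g + A ((z + z) - x))
      rw [← h1, norm_smul] at this
      simpa using this
    have h0 := norm_nonneg (g + A z)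
    nlinarith [sq_nonneg (‖g + A x‖ - ‖g + A ((z + z) - x)‖)]
  have hint : ∫ x in Metric.closedBall z t, (2 * ‖g + A z‖ ^ 2) ≤
      ∫ x in Metric.closedBall z t, (‖g + A x‖ ^ 2 + ‖g + A ((z + z) - x)‖ ^ 2) := by
    apply setIntegral_mono _ (hi1.add hi2) hpt
    exact continuousOn_const.integrableOn_compact hK
  rw [integral_add hi1 hi2, hrefl, setIntegral_const, smul_eq_mul] at hint
  linarith

lemma ebss_affine (p : EuclideanSpace ℝ (Fin 3) →ᵃ[ℝ] ℝ) :
    ∃ l : EuclideanSpace ℝ (Fin 3) →L[ℝ] ℝ, (∀ x y, p y - p x = l (y - x)) ∧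
      ∀ x, HasFDerivAt (fun y => p y) l x := by
  refine ⟨p.linear.toContinuousLinearMap, ?_, ?_⟩
  · intro x y
    have := p.linearMap_vsub y x
    simpa using this.symm
  · intro x
    have h : (fun y => p y) = fun y => p.linear.toContinuousLinearMap y + p 0 := by
      funext y
      have := p.linearMap_vsub y 0
      simp at this
      simp [this]
    rw [h]
    exact (p.linear.toContinuousLinearMap.hasFDerivAt).add_const _

lemma ebss_span (a : Fin 4 → EuclideanSpace ℝ (Fin 3)) (lam : Fin 4 → (EuclideanSpace ℝ (Fin 3) →ᵃ[ℝ] ℝ))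
    (hlam : ∀ i j : Fin 4, lam i (a j) = if i = j then 1 else 0) (q : EuclideanSpace ℝ (Fin 3) → ℝ)
    (hq : q ∈ Submodule.span ℝ {f : EuclideanSpace ℝ (Fin 3) → ℝ |
          ∃ i j : Fin 4, i ≠ j ∧ f = fun x => lam i x * lam j x}) :
    (∀ k, q (a k) = 0) ∧ ∃ (g : EuclideanSpace ℝ (Fin 3) →L[ℝ] ℝ) (A : EuclideanSpace ℝ (Fin 3) →L[ℝ] (EuclideanSpace ℝ (Fin 3) →L[ℝ] ℝ)),
      ∀ x, HasFDerivAt q (g + A x) x := by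
  induction hq using Submodule.span_induction with
  | mem f hf =>
    obtain ⟨i, j, hij, rfl⟩ := hf
    constructor
    · intro k
      simp only [hlam]
      by_cases h : i = k
      · have : j ≠ k := fun h' => hij (h.trans h'.symm)
        simp [this]
      · simp [h]
    · obtain ⟨li, hi, hi'⟩ := ebss_affine (lam i)
      obtain ⟨lj, hj, hj'⟩ := ebss_affine (lam j)
      refine ⟨lam i 0 • lj + lam j 0 • li, li.smulRight lj + lj.smulRight li, fun x => ?_⟩
      refine ((hi' x).mul (hj' x)).congr_fderiv ?_
      have e1 : lam i x = lam i 0 + li x := by have := hi 0 x; simp at this; linarith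
      have e2 : lam j x = lam j 0 + lj x := by have := hj 0 x; simp at this; linarith
      rw [e1, e2]
      ext y
      simp
      ring
  | zero => exact ⟨fun k => rfl, 0, 0, fun x => (hasFDerivAt_const (0:ℝ) x).congr_fderiv (by simp)⟩
  | add f f' _ _ h h' =>
    obtain ⟨h1, g, A, h2⟩ := h
    obtain ⟨h1', g', A', h2'⟩ := h'
    refine ⟨fun k => by simp [h1, h1'], g + g', A + A', fun x => ?_⟩
    refine ((h2 x).add (h2' x)).congr_fderiv ?_
    ext y
    simp
    ring
  | smul c f _ h =>
    obtain ⟨h1, g, A, h2⟩ := h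
    refine ⟨fun k => by simp [h1], c • g, c • A, fun x => ?_⟩
    refine ((h2 x).const_smul c).congr_fderiv ?_
    ext y
    simp

/-- Pointwise bound: an affine field is controlled by its integral over a set with a ball. -/
lemma ebss_point (K : Set (EuclideanSpace ℝ (Fin 3))) (hK : IsCompact K) (x0 : EuclideanSpace ℝ (Fin 3)) (r h : ℝ) (hr : 0 < r)
    (hball : Metric.closedBall x0 r ⊆ K) (hh : ∀ x ∈ K, ∀ y ∈ K, ‖x - y‖ ≤ h) (hh0 : 0 < h)
    (g : EuclideanSpace ℝ (Fin 3) →L[ℝ] ℝ) (A : EuclideanSpace ℝ (Fin 3) →L[ℝ] (EuclideanSpace ℝ (Fin 3) →L[ℝ] ℝ)) (N : ℝ) (hN : 0 ≤ N)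
    (hNM : N ^ 2 * volume.real (Metric.closedBall (0 : EuclideanSpace ℝ (Fin 3)) (r / 2)) =
      ∫ x in K, ‖g + A x‖ ^ 2) :
    ∀ v ∈ K, ‖g + A v‖ ≤ (1 + 4 * (h / r)) * N := by
  have hvol : ∀ z : EuclideanSpace ℝ (Fin 3), volume.real (Metric.closedBall z (r / 2)) =
      volume.real (Metric.closedBall (0 : EuclideanSpace ℝ (Fin 3)) (r / 2)) := fun z => by
    simp only [Measure.real, Measure.addHaar_closedBall_center]
  have hpos : 0 < volume.real (Metric.closedBall (0 : EuclideanSpace ℝ (Fin 3)) (r / 2)) := by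
    apply ENNReal.toReal_pos
    · exact (Metric.measure_closedBall_pos volume _ (by positivity)).ne'
    · exact measure_closedBall_lt_top.ne
  have hin : ∀ z : EuclideanSpace ℝ (Fin 3), ‖z - x0‖ ≤ r / 2 → ‖g + A z‖ ≤ N := by
    intro z hz
    have hsub : Metric.closedBall z (r / 2) ⊆ K := by
      refine (Metric.closedBall_subset_closedBall' ?_).trans hball
      rw [dist_eq_norm]; linarith
    have hcont : Continuous (fun x : EuclideanSpace ℝ (Fin 3) => ‖g + A x‖ ^ 2) := by fun_prop
    have h1 := ebss_mean g A z (r / 2)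
    have h2 : ∫ x in Metric.closedBall z (r / 2), ‖g + A x‖ ^ 2 ≤ ∫ x in K, ‖g + A x‖ ^ 2 :=
      setIntegral_mono_set (hcont.continuousOn.integrableOn_compact hK)
        (Filter.Eventually.of_forall fun x => by positivity) (hsub.eventuallyLE)
    rw [hvol, mul_comm] at h1
    have h3 := h1.trans (h2.trans hNM.ge)
    exact abs_le_of_sq_le_sq' (le_of_mul_le_mul_right h3 hpos) hN |>.2
  intro v hv
  have hx0 : x0 ∈ K := hball (Metric.mem_closedBall_self hr.le)
  have hvx := hh v hv x0 hx0
  set w : EuclideanSpace ℝ (Fin 3) := (r / (2 * h)) • (v - x0) with hw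
  have hwn : ‖w‖ ≤ r / 2 := by
    rw [hw, norm_smul, Real.norm_of_nonneg (by positivity)]
    calc r / (2 * h) * ‖v - x0‖ ≤ r / (2 * h) * h := by gcongr
      _ = r / 2 := by field_simp
  have e : g + A v = (g + A x0) + (2 * (h / r)) • ((g + A (x0 + w)) - (g + A x0)) := by
    have : v = x0 + (2 * (h / r)) • w := by
      rw [hw, smul_smul]
      have : 2 * (h / r) * (r / (2 * h)) = 1 := by field_simp
      rw [this]; simp
    conv_lhs => rw [this]
    simp only [map_add, map_smul]
    rw [show g + (A x0 + A w) - (g + A x0) = A w by abel]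
    abel
  have b0 := hin x0 (by simp; positivity)
  have b1 := hin (x0 + w) (by simpa using hwn)
  rw [e]
  calc _ ≤ ‖g + A x0‖ + ‖(2 * (h / r)) • ((g + A (x0 + w)) - (g + A x0))‖ := norm_add_le _ _
    _ ≤ N + 2 * (h / r) * (N + N) := by
      rw [norm_smul, Real.norm_of_nonneg (by positivity)]
      gcongr
      exact (norm_sub_le _ _).trans (add_le_add b1 b0)
    _ = _ := by ring



/-- The per-tetrahedron inequality in the paper's Lemma 3.7 (edge-bubble case).
For every `ρ ≥ 1` there is `C(ρ) > 0` such that for every nondegenerate tetrahedron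
`K ⊂ ℝ³` which is shape-regular with parameter `ρ` (`h_K ≤ ρ · r_K`, with `h_K` the
diameter and `r_K` the inradius), every affine `p` and every
`q ∈ P^e(K) = span{λᵢλⱼ : i ≠ j}` (products of barycentric coordinates),
`∫_K ‖∇(p + q)‖² ≥ C(ρ) (∫_K ‖∇p‖² + h_K⁻² ∫_K |q|²)`. -/
theorem edge_bubble_stable_sum :
    ∀ ρ : ℝ, 1 ≤ ρ → ∃ C : ℝ, 0 < C ∧
      ∀ a : Fin 4 → EuclideanSpace ℝ (Fin 3), AffineIndependent ℝ a →
      ∀ K : Set (EuclideanSpace ℝ (Fin 3)), K = convexHull ℝ (Set.range a) →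
      -- shape regularity: h_K ≤ ρ · r_K
      Metric.diam K ≤
        ρ * sSup {rad : ℝ | ∃ x : EuclideanSpace ℝ (Fin 3), Metric.closedBall x rad ⊆ K} →
      -- barycentric coordinate functions of K
      ∀ lam : Fin 4 → (EuclideanSpace ℝ (Fin 3) →ᵃ[ℝ] ℝ),
        (∀ i j : Fin 4, lam i (a j) = if i = j then 1 else 0) →
      ∀ (p : EuclideanSpace ℝ (Fin 3) →ᵃ[ℝ] ℝ) (q : EuclideanSpace ℝ (Fin 3) → ℝ),
        q ∈ Submodule.span ℝ {f : EuclideanSpace ℝ (Fin 3) → ℝ |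
          ∃ i j : Fin 4, i ≠ j ∧ f = fun x => lam i x * lam j x} →
        C * ((∫ x in K, ‖fderiv ℝ (fun y => p y) x‖ ^ 2) +
              (∫ x in K, (q x) ^ 2) / (Metric.diam K) ^ 2) ≤
          ∫ x in K, ‖fderiv ℝ (fun y => p y + q y) x‖ ^ 2 := by
  intro ρ hρ
  have hρ0 : 0 < ρ := by linarith
  set s : ℝ := 2 * ρ with hs
  have hs0 : 0 < s := by positivity
  refine ⟨((4 * s ^ 2 + 1) * (1 + 4 * s) ^ 2 * (2 * s) ^ 3)⁻¹, by positivity, ?_⟩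
  intro a ha K hKdef hshape lam hlam p q hq
  obtain ⟨hq0, g, A, hqd⟩ := ebss_span a lam hlam q hq
  obtain ⟨l, hl, hld⟩ := ebss_affine p
  have hK : IsCompact K := by
    rw [hKdef]; exact (Set.finite_range a).isCompact_convexHull (𝕜 := ℝ)
  have hKc : Convex ℝ K := by rw [hKdef]; exact convex_convexHull ℝ _
  have haK : ∀ i, a i ∈ K := fun i => by
    rw [hKdef]; exact subset_convexHull ℝ _ (Set.mem_range_self i)
  set h := Metric.diam K with hh
  have hdist : ∀ x ∈ K, ∀ y ∈ K, ‖x - y‖ ≤ h := fun x hx y hy => by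
    rw [← dist_eq_norm]; exact Metric.dist_le_diam_of_mem hK.isBounded hx hy
  have hpos : 0 < h := by
    have h01 : a 0 ≠ a 1 := fun e => by simpa using ha.injective e
    exact lt_of_lt_of_le (norm_pos_iff.2 (sub_ne_zero.2 h01)) (hdist _ (haK 0) _ (haK 1))
  obtain ⟨r, x0, hr, hball, hhr⟩ : ∃ r x0, 0 < r ∧ Metric.closedBall x0 r ⊆ K ∧ h ≤ s * r := by
    set S := {rad : ℝ | ∃ x : EuclideanSpace ℝ (Fin 3), Metric.closedBall x rad ⊆ K} with hS
    have hsup : 0 < sSup S := by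
      by_contra hc
      push Not at hc
      nlinarith
    have hne : S.Nonempty := by
      by_contra hc
      rw [Set.not_nonempty_iff_eq_empty] at hc
      rw [hc, Real.sSup_empty] at hsup
      exact lt_irrefl _ hsup
    obtain ⟨r, ⟨x0, hx0⟩, hr⟩ := exists_lt_of_lt_csSup hne (half_lt_self hsup)
    exact ⟨r, x0, by linarith, hx0, by rw [hs]; nlinarith⟩
  have hx0 : x0 ∈ K := hball (Metric.mem_closedBall_self hr.le)
  have hud : ∀ x, HasFDerivAt (fun y => p y + q y) ((l + g) + A x) x := fun x => by
    rw [add_assoc]; exact (hld x).add (hqd x)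
  have e1 : ∀ x, fderiv ℝ (fun y => p y) x = l := fun x => (hld x).fderiv
  have e2 : ∀ x, fderiv ℝ (fun y => p y + q y) x = (l + g) + A x := fun x => (hud x).fderiv
  simp only [e1, e2]
  set I := ∫ x in K, ‖(l + g) + A x‖ ^ 2 with hI
  have hI0 : 0 ≤ I := integral_nonneg fun x => by positivity
  set V := volume.real (Metric.closedBall (0 : EuclideanSpace ℝ (Fin 3)) (r / 2)) with hV
  have hVpos : 0 < V := by
    apply ENNReal.toReal_pos
    · exact (Metric.measure_closedBall_pos volume _ (by positivity)).ne'
    · exact measure_closedBall_lt_top.ne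
  set N0 := Real.sqrt (I / V) with hN0
  have hN0sq : N0 ^ 2 * V = I := by
    rw [hN0, Real.sq_sqrt (by positivity)]; field_simp
  have hN0nn : 0 ≤ N0 := Real.sqrt_nonneg _
  have hpt := ebss_point K hK x0 r h hr hball hdist hpos (l + g) A N0 hN0nn hN0sq
  have hratio : h / r ≤ s := by rw [div_le_iff₀ hr]; exact hhr
  set N := (1 + 4 * s) * N0 with hN
  have hNnn : 0 ≤ N := by positivity
  have hptN : ∀ v ∈ K, ‖(l + g) + A v‖ ≤ N := fun v hv => (hpt v hv).trans (by
    rw [hN]; gcongr)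
  have hlip : ∀ x ∈ K, ∀ y ∈ K, |(p y + q y) - (p x + q x)| ≤ N * h := by
    intro x hx y hy
    have := hKc.norm_image_sub_le_of_norm_hasFDerivWithin_le
      (fun x _ => (hud x).hasFDerivWithinAt) hptN hx hy
    exact this.trans (by gcongr; exact hdist _ hy _ hx)
  have hpu : ∀ x ∈ K, ∀ y ∈ K, |p y - (p x + q x)| ≤ N * h := by
    intro x hx y hy
    have hc : Convex ℝ (p ⁻¹' (Metric.closedBall (p x + q x) (N * h))) :=
      (convex_closedBall _ _).affine_preimage p
    have hsub : K ⊆ p ⁻¹' (Metric.closedBall (p x + q x) (N * h)) := by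
      nth_rewrite 1 [hKdef]
      refine convexHull_min ?_ hc
      rintro _ ⟨i, rfl⟩
      have := hlip x hx (a i) (haK i)
      rw [hq0, add_zero] at this
      simpa [Real.dist_eq] using this
    simpa [Real.dist_eq] using hsub hy
  have hqb : ∀ x ∈ K, |q x| ≤ N * h := fun x hx => by
    have := hpu x hx x hx
    rwa [show p x - (p x + q x) = -q x by ring, abs_neg] at this
  have hlb : ‖l‖ ≤ 2 * N * s := by
    refine l.opNorm_le_bound (by positivity) fun y => ?_
    by_cases hy : y = 0
    · simp [hy]
    have hyn : 0 < ‖y‖ := norm_pos_iff.2 hy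
    set w := (r / ‖y‖) • y with hw
    have hwn : ‖w‖ = r := by
      rw [hw, norm_smul, Real.norm_of_nonneg (by positivity)]; field_simp
    have hmem : x0 + w ∈ K := hball (by simp [hwn])
    have b1 := hpu x0 hx0 _ hmem
    have b2 := hpu x0 hx0 _ hx0
    have b3 : |l w| ≤ 2 * N * h := by
      have := hl x0 (x0 + w)
      rw [add_sub_cancel_left] at this
      rw [← this, abs_le]
      rw [abs_le] at b1 b2
      constructor <;> linarith [b1.1, b1.2, b2.1, b2.2]
    have hly : l w = (r / ‖y‖) * l y := by rw [hw, map_smul, smul_eq_mul]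
    rw [hly, abs_mul, abs_of_pos (by positivity : 0 < r / ‖y‖)] at b3
    rw [Real.norm_eq_abs]
    have b4 : r * |l y| ≤ r * (2 * N * s * ‖y‖) := by
      calc r * |l y| = (r / ‖y‖ * |l y|) * ‖y‖ := by field_simp
        _ ≤ (2 * N * (s * r)) * ‖y‖ := by
          refine mul_le_mul_of_nonneg_right (b3.trans ?_) hyn.le
          gcongr
        _ = _ := by ring
    exact le_of_mul_le_mul_left b4 hr
  have hKfin : volume K ≠ ⊤ := hK.measure_lt_top.ne
  have hKV : volume.real K ≤ (2 * s) ^ 3 * V := by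
    have hsub : K ⊆ Metric.closedBall x0 ((2 * s) * (r / 2)) := fun x hx => by
      rw [Metric.mem_closedBall, dist_eq_norm]
      exact (hdist x hx x0 hx0).trans (by linarith)
    calc volume.real K ≤ volume.real (Metric.closedBall x0 ((2 * s) * (r / 2))) :=
          measureReal_mono hsub measure_closedBall_lt_top.ne
      _ = (2 * s) ^ 3 * V := by
        rw [hV, Measure.real, Measure.addHaar_closedBall_mul volume x0 (by positivity)
          (by positivity), ENNReal.toReal_mul, ENNReal.toReal_ofReal (by positivity)]
        simp [Measure.real]
  have hqi : ∫ x in K, (q x) ^ 2 ≤ volume.real K * (N * h) ^ 2 := by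
    have hqc : Continuous q := continuous_iff_continuousAt.2 fun x => (hqd x).continuousAt
    have : ∫ x in K, (q x) ^ 2 ≤ ∫ x in K, (N * h) ^ 2 := by
      apply setIntegral_mono_on ((hqc.pow 2).continuousOn.integrableOn_compact hK)
        (continuousOn_const.integrableOn_compact hK) hK.measurableSet
      intro x hx
      have := hqb x hx
      change q x ^ 2 ≤ (N * h) ^ 2
      rw [← sq_abs (q x)]
      gcongr
    rwa [setIntegral_const, smul_eq_mul] at this
  rw [setIntegral_const, smul_eq_mul, inv_mul_le_iff₀ (by positivity)]
  calc _ ≤ volume.real K * (2 * N * s) ^ 2 + volume.real K * (N * h) ^ 2 / h ^ 2 := by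
        gcongr
    _ = volume.real K * ((4 * s ^ 2 + 1) * N ^ 2) := by field_simp; ring
    _ ≤ ((2 * s) ^ 3 * V) * ((4 * s ^ 2 + 1) * N ^ 2) := by gcongr
    _ = (4 * s ^ 2 + 1) * (1 + 4 * s) ^ 2 * (2 * s) ^ 3 * I := by
        rw [← hN0sq, hN]; ring
end

section
/- For every ρ ≥ 1 there exists a constant C(ρ) > 0 such that for every nondegenerate tetrahedron K ⊂ ℝ³ that is shape-regular with parameter ρ (i.e., h_K ≤ ρ · r_K), every affine function p : ℝ³ → ℝ, and every q ∈ P^f(K) (the span of the four products q_i = λ_j λ_k λ_l with {j, k, l} = {1,2,3,4} \ {i} of barycentric coordinate functions), one has ∫_K ‖∇(p + q)‖² ≥ C(ρ) ( ∫_K ‖∇p‖² + h_K⁻² ∫_K |q|² ). (The per-tetrahedron inequality proved in the paper's Lemma 3.7, face-bubble case.) -/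
open MeasureTheory

namespace FaceBubble

abbrev E3 := EuclideanSpace ℝ (Fin 3)
abbrev V7 := (Fin 3 → ℝ) × (Fin 4 → ℝ)

/-- Directional derivatives of `p + q` along the edges from vertex `0`, in barycentric terms. -/
def G (v : V7) (l : Fin 4 → ℝ) : Fin 3 → ℝ :=
  ![v.1 0 + (v.2 0 - v.2 1) * (l 2 * l 3) + (l 0 - l 1) * (v.2 2 * l 3 + v.2 3 * l 2),
    v.1 1 + (v.2 0 - v.2 2) * (l 1 * l 3) + (l 0 - l 2) * (v.2 1 * l 3 + v.2 3 * l 1),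
    v.1 2 + (v.2 0 - v.2 3) * (l 1 * l 2) + (l 0 - l 3) * (v.2 1 * l 2 + v.2 2 * l 1)]

def S (v : V7) (l : Fin 4 → ℝ) : ℝ := G v l 0 ^ 2 + G v l 1 ^ 2 + G v l 2 ^ 2

def bary (y : E3) : Fin 4 → ℝ := ![1 - y 0 - y 1 - y 2, y 0, y 1, y 2]

def Ref : Set E3 := {y | ∀ i, 0 ≤ bary y i}

lemma mem_Ref (y : E3) : y ∈ Ref ↔ 0 ≤ 1 - y 0 - y 1 - y 2 ∧ 0 ≤ y 0 ∧ 0 ≤ y 1 ∧ 0 ≤ y 2 := by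
  simp [Ref, bary, Fin.forall_fin_succ]

lemma continuous_bary : Continuous bary := by
  unfold bary
  refine continuous_pi fun i => ?_
  fin_cases i <;> simp <;> fun_prop

lemma continuous_S : Continuous (fun z : V7 × (Fin 4 → ℝ) => S z.1 z.2) := by
  unfold S G
  simp
  fun_prop

lemma isCompact_Ref : IsCompact Ref := by
  refine Metric.isCompact_of_isClosed_isBounded ?_ ?_
  · have : Ref = ⋂ i, {y | 0 ≤ bary y i} := by ext; simp [Ref]
    rw [this]
    exact isClosed_iInter fun i =>
      isClosed_le continuous_const ((continuous_apply i).comp continuous_bary)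
  · refine (Metric.isBounded_closedBall (x := (0 : E3)) (r := 3)).subset fun y hy => ?_
    rw [mem_Ref] at hy
    rw [mem_closedBall_zero_iff, EuclideanSpace.norm_eq, Real.sqrt_le_left (by norm_num)]
    simp [Fin.sum_univ_three]
    nlinarith

lemma convex_Ref : Convex ℝ Ref := by
  intro x hx y hy a b ha hb hab
  rw [mem_Ref] at *
  obtain ⟨h0, h1, h2, h3⟩ := hx
  obtain ⟨k0, k1, k2, k3⟩ := hy
  simp
  refine ⟨?_, by positivity, by positivity, by positivity⟩
  nlinarith [mul_nonneg ha h0, mul_nonneg hb k0]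

lemma Ref_subset : Ref ⊆ closure (interior Ref) := by
  rw [convex_Ref.closure_interior_eq_closure_of_nonempty_interior]
  · exact subset_closure
  · refine ⟨!₂[1/4, 1/4, 1/4], ?_⟩
    rw [mem_interior]
    refine ⟨⋂ i, {y | 0 < bary y i}, ?_, ?_, ?_⟩
    · intro y hy i
      exact (Set.mem_iInter.1 hy i).le
    · exact isOpen_iInter_of_finite fun i =>
        isOpen_lt continuous_const ((continuous_apply i).comp continuous_bary)
    · rw [Set.mem_iInter]
      intro i
      fin_cases i <;> simp [bary] 
      norm_num

lemma eq_zero_of_G (v : V7) (h : ∀ y ∈ Ref, S v (bary y) = 0) : v = 0 := by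
  have h' : ∀ y ∈ Ref, ∀ j, G v (bary y) j = 0 := by
    intro y hy
    have := h y hy
    unfold S at this
    have a := sq_nonneg (G v (bary y) 0)
    have b := sq_nonneg (G v (bary y) 1)
    have c := sq_nonneg (G v (bary y) 2)
    intro j
    have : G v (bary y) j ^ 2 = 0 := by
      revert j
      rw [Fin.forall_fin_succ, Fin.forall_fin_two]
      exact ⟨by linarith, show G v (bary y) 1 ^ 2 = 0 by linarith,
        show G v (bary y) 2 ^ 2 = 0 by linarith⟩
    exact pow_eq_zero_iff (two_ne_zero) |>.1 this
  have z := h' !₂[0,0,0] (by rw [mem_Ref]; simp; try norm_num)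
  have z1 := h' !₂[1/2,0,0] (by rw [mem_Ref]; simp; try norm_num)
  have z2 := h' !₂[0,1/2,0] (by rw [mem_Ref]; simp; try norm_num)
  have z3 := h' !₂[0,0,1/2] (by rw [mem_Ref]; simp; try norm_num)
  have z4 := h' !₂[0,1/2,1/2] (by rw [mem_Ref]; simp; try norm_num)
  simp [Fin.forall_fin_succ, G, bary] at z z1 z2 z3 z4
  norm_num [z] at z1 z2 z3 z4
  ext i
  · fin_cases i <;> simp [z]
  · fin_cases i <;> simp <;> grind

noncomputable def N (v : V7) : ℝ := ∫ y in Ref, S v (bary y)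

lemma S_nonneg (v l) : 0 ≤ S v l := by unfold S; positivity

lemma continuous_S_bary (v : V7) : Continuous fun y => S v (bary y) :=
  continuous_S.comp (continuous_const.prodMk continuous_bary)

lemma N_pos (v : V7) (hv : v ≠ 0) : 0 < N v := by
  refine lt_of_le_of_ne (integral_nonneg fun y => S_nonneg _ _) fun h => hv ?_
  have h2 := (setIntegral_eq_zero_iff_of_nonneg_ae
    (Filter.Eventually.of_forall fun y => S_nonneg _ _)
    ((continuous_S_bary v).continuousOn.integrableOn_compact isCompact_Ref)).1 h.symm
  have h3 := Measure.eqOn_of_ae_eq h2 (continuous_S_bary v).continuousOn continuousOn_const Ref_subset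
  exact eq_zero_of_G v fun y hy => h3 hy

lemma continuous_N : Continuous N := by
  unfold N
  refine continuous_parametric_integral_of_continuous (f := fun v y => S v (bary y)) ?_ isCompact_Ref
  exact continuous_S.comp (continuous_fst.prodMk (continuous_bary.comp continuous_snd))

lemma S_smul (t : ℝ) (v l) : S (t • v) l = t ^ 2 * S v l := by
  simp [S, G]; ring

lemma N_smul (t : ℝ) (v) : N (t • v) = t ^ 2 * N v := by
  simp [N, S_smul, integral_const_mul]

lemma exists_lower : ∃ c : ℝ, 0 < c ∧ ∀ v : V7, c * ‖v‖ ^ 2 ≤ N v := by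
  obtain ⟨w, hw, hmin⟩ := (isCompact_sphere (0 : V7) 1).exists_isMinOn
    (NormedSpace.sphere_nonempty.2 zero_le_one) continuous_N.continuousOn
  refine ⟨N w, N_pos w ?_, fun v => ?_⟩
  · rintro rfl; simp at hw
  · by_cases hv : v = 0
    · simp [hv, N]
      exact integral_nonneg fun y => S_nonneg _ _
    · have hn : ‖v‖ ≠ 0 := norm_ne_zero_iff.2 hv
      have h1 : N w ≤ N (‖v‖⁻¹ • v) := hmin (by simp [norm_smul, hn])
      rw [N_smul] at h1
      have : ‖v‖ ^ 2 * (‖v‖⁻¹ ^ 2 * N v) = N v := by field_simp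
      rw [← this, mul_comm]
      gcongr


section Geometry

variable {a : Fin 4 → E3} {lam : Fin 4 → (E3 →ᵃ[ℝ] ℝ)}

noncomputable def Lin (a : Fin 4 → E3) : E3 →L[ℝ] E3 :=
  ∑ j : Fin 3, (EuclideanSpace.proj j : E3 →L[ℝ] ℝ).smulRight (a j.succ - a 0)

noncomputable def Phi (a : Fin 4 → E3) (y : E3) : E3 := Lin a y + a 0

lemma Lin_apply (y : E3) : Lin a y = y 0 • (a 1 - a 0) + y 1 • (a 2 - a 0) + y 2 • (a 3 - a 0) := by
  simp [Lin, Fin.sum_univ_three]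

lemma lin_edge (hlam : ∀ i j : Fin 4, lam i (a j) = if i = j then 1 else 0) (i j k : Fin 4) :
    (lam i).linear (a j - a k) = (if i = j then 1 else 0) - (if i = k then 1 else 0) := by
  rw [← hlam i j, ← hlam i k]
  exact (lam i).linearMap_vsub _ _

lemma lam_Phi (hlam : ∀ i j : Fin 4, lam i (a j) = if i = j then 1 else 0) (y : E3) (i : Fin 4) :
    lam i (Phi a y) = bary y i := by
  have h : lam i (Phi a y) = (lam i).linear (Lin a y) + lam i (a 0) := (lam i).map_vadd _ _
  rw [h, Lin_apply, hlam]
  simp only [map_add, map_smul, lin_edge hlam]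
  fin_cases i <;> simp [bary]
  ring

lemma span_top (ha : AffineIndependent ℝ a) : affineSpan ℝ (Set.range a) = ⊤ := by
  rw [ha.affineSpan_eq_top_iff_card_eq_finrank_add_one]; simp

lemma lam_eq (ha : AffineIndependent ℝ a)
    (hlam : ∀ i j : Fin 4, lam i (a j) = if i = j then 1 else 0) (i : Fin 4) :
    lam i = (AffineBasis.mk a ha (span_top ha)).coord i := by
  refine AffineMap.ext_on (span_top ha) ?_
  rintro _ ⟨j, rfl⟩
  rw [hlam]
  exact ((AffineBasis.mk a ha (span_top ha)).coord_apply i j).symm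

lemma hull_eq (ha : AffineIndependent ℝ a)
    (hlam : ∀ i j : Fin 4, lam i (a j) = if i = j then 1 else 0) :
    convexHull ℝ (Set.range a) = {x | ∀ i, 0 ≤ lam i x} := by
  have := (AffineBasis.mk a ha (span_top ha)).convexHull_eq_nonneg_coord
  simp only [← lam_eq ha hlam] at this
  exact this

lemma sum_lam (ha : AffineIndependent ℝ a)
    (hlam : ∀ i j : Fin 4, lam i (a j) = if i = j then 1 else 0) (x : E3) :
    ∑ i, lam i x = 1 := by
  simp only [lam_eq ha hlam, AffineBasis.sum_coord_apply_eq_one]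

lemma lam_le_one (ha : AffineIndependent ℝ a)
    (hlam : ∀ i j : Fin 4, lam i (a j) = if i = j then 1 else 0) {x : E3}
    (hx : ∀ i, 0 ≤ lam i x) (i : Fin 4) : lam i x ≤ 1 := by
  rw [← sum_lam ha hlam x]
  exact Finset.single_le_sum (fun i _ => hx i) (Finset.mem_univ i)

lemma hull_image (ha : AffineIndependent ℝ a)
    (hlam : ∀ i j : Fin 4, lam i (a j) = if i = j then 1 else 0) :
    convexHull ℝ (Set.range a) = Phi a '' Ref := by
  rw [hull_eq ha hlam]
  ext x
  constructor
  · intro hx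
    have hs := sum_lam ha hlam x
    rw [Fin.sum_univ_four] at hs
    have hb : bary !₂[lam 1 x, lam 2 x, lam 3 x] = fun i => lam i x := by
      ext i
      fin_cases i <;> simp [bary]
      linarith
    refine ⟨!₂[lam 1 x, lam 2 x, lam 3 x], ?_, ?_⟩
    · intro i
      rw [hb]
      exact hx i
    · refine (AffineBasis.mk a ha (span_top ha)).ext_elem fun i => ?_
      rw [← lam_eq ha hlam, lam_Phi hlam, hb]
  · rintro ⟨y, hy, rfl⟩ i
    rw [lam_Phi hlam]
    exact hy i

lemma Phi_inj (hlam : ∀ i j : Fin 4, lam i (a j) = if i = j then 1 else 0) :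
    Function.Injective (Phi a) := by
  intro y z h
  have h1 : ∀ i, bary y i = bary z i := fun i => by rw [← lam_Phi hlam, ← lam_Phi hlam, h]
  ext i
  fin_cases i
  · exact h1 1
  · exact h1 2
  · exact h1 3

lemma integral_hull (ha : AffineIndependent ℝ a)
    (hlam : ∀ i j : Fin 4, lam i (a j) = if i = j then 1 else 0) (g : E3 → ℝ) :
    ∫ x in convexHull ℝ (Set.range a), g x = |(Lin a).det| * ∫ y in Ref, g (Phi a y) := by
  rw [hull_image ha hlam, integral_image_eq_integral_abs_det_fderiv_smul volume (f := Phi a)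
    isCompact_Ref.measurableSet (f' := fun _ => Lin a)
    (fun x _ => ((Lin a).hasFDerivAt.add_const (a 0)).hasFDerivWithinAt)
    (Phi_inj hlam).injOn]
  simp [integral_const_mul]

lemma affine_hasFDerivAt (f : E3 →ᵃ[ℝ] ℝ) (x : E3) :
    HasFDerivAt (fun y => f y) (LinearMap.toContinuousLinearMap f.linear) x := by
  have : (fun y => f y) = fun y => LinearMap.toContinuousLinearMap f.linear y + f 0 := by
    ext y
    simpa using f.map_vadd 0 y
  rw [this]
  exact (ContinuousLinearMap.hasFDerivAt _).add_const _

/-- The explicit face-bubble combination. -/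
def qq (c : Fin 4 → ℝ) (l : Fin 4 → ℝ) : ℝ :=
  c 0 * (l 1 * l 2 * l 3) + c 1 * (l 0 * l 2 * l 3) + c 2 * (l 0 * l 1 * l 3)
    + c 3 * (l 0 * l 1 * l 2)

lemma exists_coef {q : E3 → ℝ} (hq : q ∈ Submodule.span ℝ {f : E3 → ℝ |
          ∃ i : Fin 4, f = fun x => ∏ j ∈ Finset.univ.erase i, lam j x}) :
    ∃ c : Fin 4 → ℝ, q = fun x => qq c (fun i => lam i x) := by
  have : {f : E3 → ℝ | ∃ i : Fin 4, f = fun x => ∏ j ∈ Finset.univ.erase i, lam j x}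
    = Set.range (fun i : Fin 4 => fun x => ∏ j ∈ Finset.univ.erase i, lam j x) := by
    ext f; simp [eq_comm]
  rw [this, Submodule.mem_span_range_iff_exists_fun] at hq
  obtain ⟨c, rfl⟩ := hq
  refine ⟨c, ?_⟩
  have e0 : (Finset.univ.erase 0 : Finset (Fin 4)) = {1, 2, 3} := by decide
  have e1 : (Finset.univ.erase 1 : Finset (Fin 4)) = {0, 2, 3} := by decide
  have e2 : (Finset.univ.erase 2 : Finset (Fin 4)) = {0, 1, 3} := by decide
  have e3 : (Finset.univ.erase 3 : Finset (Fin 4)) = {0, 1, 2} := by decide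
  ext x
  simp [Fin.sum_univ_four, e0, e1, e2, e3, qq]
  ring

lemma qq_hasFDerivAt (c : Fin 4 → ℝ) (x : E3) :
    ∃ D : E3 →L[ℝ] ℝ, HasFDerivAt (fun y => qq c (fun i => lam i y)) D x ∧ ∀ w, D w =
      c 0 * ((lam 1).linear w * lam 2 x * lam 3 x + lam 1 x * (lam 2).linear w * lam 3 x
        + lam 1 x * lam 2 x * (lam 3).linear w)
      + c 1 * ((lam 0).linear w * lam 2 x * lam 3 x + lam 0 x * (lam 2).linear w * lam 3 x
        + lam 0 x * lam 2 x * (lam 3).linear w)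
      + c 2 * ((lam 0).linear w * lam 1 x * lam 3 x + lam 0 x * (lam 1).linear w * lam 3 x
        + lam 0 x * lam 1 x * (lam 3).linear w)
      + c 3 * ((lam 0).linear w * lam 1 x * lam 2 x + lam 0 x * (lam 1).linear w * lam 2 x
        + lam 0 x * lam 1 x * (lam 2).linear w) := by
  have h := fun i => affine_hasFDerivAt (lam i) x
  refine ⟨_, ((((((h 1).mul (h 2)).mul (h 3)).const_mul (c 0)).add
    ((((h 0).mul (h 2)).mul (h 3)).const_mul (c 1))).add
    ((((h 0).mul (h 1)).mul (h 3)).const_mul (c 2))).add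
    ((((h 0).mul (h 1)).mul (h 2)).const_mul (c 3)), fun w => ?_⟩
  simp
  ring

/-- The coefficient vector of `p + q`. -/
noncomputable def coef (a : Fin 4 → E3) (p : E3 →ᵃ[ℝ] ℝ) (c : Fin 4 → ℝ) : V7 :=
  (fun j => p (a j.succ) - p (a 0), c)

lemma fderiv_edge (hlam : ∀ i j : Fin 4, lam i (a j) = if i = j then 1 else 0)
    (p : E3 →ᵃ[ℝ] ℝ) (c : Fin 4 → ℝ) (x : E3) (j : Fin 3) :
    fderiv ℝ (fun y => p y + qq c (fun i => lam i y)) x (a j.succ - a 0)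
      = G (coef a p c) (fun i => lam i x) j := by
  obtain ⟨D, hD, hw⟩ := qq_hasFDerivAt (lam := lam) c x
  have hs : HasFDerivAt (fun y => p y + qq c (fun i => lam i y)) _ x :=
    (affine_hasFDerivAt p x).add hD
  rw [hs.fderiv]
  have hp : p.linear (a j.succ - a 0) = p (a j.succ) - p (a 0) := p.linearMap_vsub _ _
  rw [_root_.add_apply, hw]
  simp only [lin_edge hlam, LinearMap.coe_toContinuousLinearMap', hp]
  fin_cases j <;> simp [G, coef] <;> ring

lemma p_linear (ha : AffineIndependent ℝ a)
    (hlam : ∀ i j : Fin 4, lam i (a j) = if i = j then 1 else 0)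
    (p : E3 →ᵃ[ℝ] ℝ) (c : Fin 4 → ℝ) (w : E3) :
    p.linear w = ∑ j : Fin 3, (coef a p c).1 j * (lam j.succ).linear w := by
  have : p = AffineMap.const ℝ E3 (p (a 0))
      + ∑ j : Fin 3, (coef a p c).1 j • lam j.succ := by
    refine AffineMap.ext_on (span_top ha) ?_
    rintro _ ⟨j, rfl⟩
    fin_cases j <;> simp [coef, hlam, Fin.sum_univ_three]
  conv_lhs => rw [this]
  simp [Fin.sum_univ_three]


lemma affine_contDiff (f : E3 →ᵃ[ℝ] ℝ) : ContDiff ℝ 1 (fun y => f y) := by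
  have : (fun y => f y) = fun y => LinearMap.toContinuousLinearMap f.linear y + f 0 := by
    ext y
    simpa using f.map_vadd 0 y
  rw [this]
  exact (ContinuousLinearMap.contDiff _).add contDiff_const

lemma qq_contDiff (c : Fin 4 → ℝ) : ContDiff ℝ 1 (fun y => qq c (fun i => lam i y)) := by
  have h := fun i => affine_contDiff (lam i)
  have h0 := h 0
  have h1 := h 1
  have h2 := h 2
  have h3 := h 3
  unfold qq
  fun_prop

lemma norm_lin_le (ha : AffineIndependent ℝ a)
    (hlam : ∀ i j : Fin 4, lam i (a j) = if i = j then 1 else 0) {x : E3} {r : ℝ} (hr : 0 < r)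
    (hball : Metric.closedBall x r ⊆ convexHull ℝ (Set.range a)) (i : Fin 4) (w : E3) :
    |(lam i).linear w| ≤ r⁻¹ * ‖w‖ := by
  rw [hull_eq ha hlam] at hball
  by_cases hw : w = 0
  · simp [hw]
  have hn : 0 < ‖w‖ := norm_pos_iff.2 hw
  have hx := hball (Metric.mem_closedBall_self hr.le)
  have hy : (r / ‖w‖) • w + x ∈ Metric.closedBall x r := by
    rw [mem_closedBall_iff_norm]
    simp only [add_sub_cancel_right, norm_smul, norm_div, Real.norm_eq_abs, abs_norm]
    rw [div_mul_cancel₀ _ hn.ne', abs_of_pos hr]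
  have hy := hball hy
  have h0 : lam i ((r / ‖w‖) • w + x) = (lam i).linear ((r / ‖w‖) • w) + lam i x :=
    (lam i).map_vadd _ _
  have h1 := lam_le_one ha hlam hx i
  have h2 := lam_le_one ha hlam hy i
  have h3 := hx i
  have h4 := hy i
  rw [h0] at h2 h4
  have h5 : |(lam i).linear ((r / ‖w‖) • w)| ≤ 1 := by
    rw [abs_le]; constructor <;> linarith
  rw [map_smul, smul_eq_mul, abs_mul, abs_of_pos (div_pos hr hn)] at h5
  rw [inv_mul_eq_div, le_div_iff₀ hr]
  rw [div_mul_eq_mul_div, div_le_one hn] at h5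
  linarith

lemma norm_fderiv_p (ha : AffineIndependent ℝ a)
    (hlam : ∀ i j : Fin 4, lam i (a j) = if i = j then 1 else 0) {x : E3} {r : ℝ} (hr : 0 < r)
    (hball : Metric.closedBall x r ⊆ convexHull ℝ (Set.range a)) (p : E3 →ᵃ[ℝ] ℝ)
    (c : Fin 4 → ℝ) (z : E3) :
    ‖fderiv ℝ (fun y => p y) z‖ ≤ 3 * ‖coef a p c‖ * r⁻¹ := by
  rw [(affine_hasFDerivAt p z).fderiv]
  refine ContinuousLinearMap.opNorm_le_bound _ (by positivity) fun w => ?_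
  rw [LinearMap.coe_toContinuousLinearMap', p_linear ha hlam p c w]
  calc ‖∑ j : Fin 3, (coef a p c).1 j * (lam j.succ).linear w‖
      ≤ ∑ j : Fin 3, ‖coef a p c‖ * (r⁻¹ * ‖w‖) := by
        refine norm_sum_le_of_le _ fun j _ => ?_
        rw [norm_mul]
        exact mul_le_mul ((norm_le_pi_norm _ j).trans (norm_fst_le _))
          (norm_lin_le ha hlam hr hball _ w) (norm_nonneg _) (norm_nonneg _)
    _ = _ := by simp; ring

lemma qq_abs_le (v : V7) {l : Fin 4 → ℝ} (h0 : ∀ i, 0 ≤ l i) (h1 : ∀ i, l i ≤ 1) :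
    qq v.2 l ^ 2 ≤ 16 * ‖v‖ ^ 2 := by
  have key : ∀ i j k m, |v.2 i * (l j * l k * l m)| ≤ ‖v‖ := by
    intro i j k m
    rw [abs_mul]
    have h2 : |l j * l k * l m| ≤ 1 := by
      rw [abs_of_nonneg (mul_nonneg (mul_nonneg (h0 _) (h0 _)) (h0 _))]
      exact mul_le_one₀ (mul_le_one₀ (h1 _) (h0 _) (h1 _)) (h0 _) (h1 _)
    calc _ ≤ ‖v‖ * 1 := mul_le_mul ((norm_le_pi_norm v.2 i).trans (norm_snd_le v)) h2
            (abs_nonneg _) (norm_nonneg _)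
      _ = _ := mul_one _
  have : |qq v.2 l| ≤ 4 * ‖v‖ := by
    unfold qq
    have k0 := abs_le.1 (key 0 1 2 3)
    have k1 := abs_le.1 (key 1 0 2 3)
    have k2 := abs_le.1 (key 2 0 1 3)
    have k3 := abs_le.1 (key 3 0 1 2)
    rw [abs_le]
    constructor <;> linarith
  rw [← sq_abs]
  nlinarith [abs_nonneg (qq v.2 l), norm_nonneg v]

end Geometry

lemma final_arith {A B I d c₀ V ρ n h : ℝ} (hd0 : 0 ≤ d) (hc₀ : 0 ≤ c₀) (hV0 : 0 ≤ V)
    (hpos : 0 < h) (hA : A ≤ d * (V * (36 * ρ ^ 2 * n ^ 2 / h ^ 2)))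
    (hB : B ≤ d * (V * (16 * n ^ 2))) (hL : d * (c₀ * n ^ 2) ≤ 3 * h ^ 2 * I) :
    c₀ / (3 * (V + 1) * (36 * ρ ^ 2 + 16)) * (A + B / h ^ 2) ≤ I := by
  have hI : d * (c₀ * n ^ 2) / (3 * h ^ 2) ≤ I := by
    rw [div_le_iff₀ (by positivity)]; linarith
  refine le_trans ?_ hI
  calc _ ≤ c₀ / (3 * (V + 1) * (36 * ρ ^ 2 + 16)) * (d * (V * (36 * ρ ^ 2 * n ^ 2 / h ^ 2))
        + d * (V * (16 * n ^ 2)) / h ^ 2) := by gcongr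
    _ = d * (c₀ * n ^ 2) / (3 * h ^ 2) * (V / (V + 1)) := by
        have : V + 1 ≠ 0 := by positivity
        have : 36 * ρ ^ 2 + 16 ≠ 0 := by positivity
        field_simp
    _ ≤ d * (c₀ * n ^ 2) / (3 * h ^ 2) * 1 := by
        gcongr
        rw [div_le_one (by positivity)]; linarith
    _ = _ := mul_one _

end FaceBubble

open FaceBubble

theorem face_bubble_stable_sum :
    ∀ ρ : ℝ, 1 ≤ ρ → ∃ C : ℝ, 0 < C ∧
      ∀ a : Fin 4 → EuclideanSpace ℝ (Fin 3), AffineIndependent ℝ a →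
      ∀ K : Set (EuclideanSpace ℝ (Fin 3)), K = convexHull ℝ (Set.range a) →
      -- shape regularity: h_K ≤ ρ · r_K
      Metric.diam K ≤
        ρ * sSup {rad : ℝ | ∃ x : EuclideanSpace ℝ (Fin 3), Metric.closedBall x rad ⊆ K} →
      -- barycentric coordinate functions of K
      ∀ lam : Fin 4 → (EuclideanSpace ℝ (Fin 3) →ᵃ[ℝ] ℝ),
        (∀ i j : Fin 4, lam i (a j) = if i = j then 1 else 0) →
      ∀ (p : EuclideanSpace ℝ (Fin 3) →ᵃ[ℝ] ℝ) (q : EuclideanSpace ℝ (Fin 3) → ℝ),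
        q ∈ Submodule.span ℝ {f : EuclideanSpace ℝ (Fin 3) → ℝ |
          ∃ i : Fin 4, f = fun x => ∏ j ∈ Finset.univ.erase i, lam j x} →
        C * ((∫ x in K, ‖fderiv ℝ (fun y => p y) x‖ ^ 2) +
              (∫ x in K, (q x) ^ 2) / (Metric.diam K) ^ 2) ≤
          ∫ x in K, ‖fderiv ℝ (fun y => p y + q y) x‖ ^ 2 := by
  intro ρ hρ
  obtain ⟨c₀, hc₀, hN⟩ := exists_lower
  have hV0 : 0 ≤ volume.real Ref := measureReal_nonneg
  set V := volume.real Ref with hV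
  refine ⟨c₀ / (3 * (V + 1) * (36 * ρ ^ 2 + 16)), by positivity, ?_⟩
  intro a ha K hK hreg lam hlam p q hq
  obtain ⟨c, rfl⟩ := exists_coef hq
  have hKc : IsCompact K := by
    rw [hK]; exact (Set.finite_range a).isCompact_convexHull ℝ
  have haK : ∀ i, a i ∈ K := fun i => by
    rw [hK]; exact subset_convexHull ℝ _ (Set.mem_range_self i)
  have hedge : ∀ i j, ‖a i - a j‖ ≤ Metric.diam K := fun i j => by
    rw [← dist_eq_norm]; exact Metric.dist_le_diam_of_mem hKc.isBounded (haK i) (haK j)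
  set h := Metric.diam K with hh
  have hpos : 0 < h := by
    refine lt_of_lt_of_le ?_ (hedge 0 1)
    rw [norm_pos_iff, sub_ne_zero]
    exact ha.injective.ne (by decide)
  -- a ball of radius comparable to `h`
  obtain ⟨r, hr, x₀, hx₀, hhr⟩ : ∃ r : ℝ, 0 < r ∧ ∃ x₀ : E3,
      Metric.closedBall x₀ r ⊆ convexHull ℝ (Set.range a) ∧ h ≤ 2 * ρ * r := by
    set s := sSup {rad : ℝ | ∃ x : E3, Metric.closedBall x rad ⊆ K} with hs
    have hs0 : 0 < s := by
      by_contra hcon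
      nlinarith
    obtain ⟨r, ⟨x, hx⟩, hr⟩ := exists_lt_of_lt_csSup
      (s := {rad : ℝ | ∃ x : E3, Metric.closedBall x rad ⊆ K})
      ⟨-1, (0 : E3), by simp⟩ (show s / 2 < s by linarith)
    exact ⟨r, by linarith, x, hK ▸ hx, by nlinarith⟩
  set v := coef a p c with hv
  set d := |(Lin a).det| with hd
  have hd0 : 0 ≤ d := abs_nonneg _
  have hrinv : r⁻¹ ≤ 2 * ρ / h := by
    rw [inv_le_comm₀ hr (by positivity), inv_div, div_le_iff₀ (by positivity)]
    linarith
  have hconst : ∀ t : ℝ, ∫ x in K, t = d * (V * t) := by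
    intro t
    rw [hK, integral_hull ha hlam]
    rw [setIntegral_const, smul_eq_mul]
  have hint : ∀ {f : E3 → ℝ}, Continuous f → IntegrableOn f K := fun hf =>
    hf.continuousOn.integrableOn_compact hKc
  -- upper bounds
  have hB1 : ∫ x in K, ‖fderiv ℝ (fun y => p y) x‖ ^ 2 ≤ d * (V * (36 * ρ ^ 2 * ‖v‖ ^ 2 / h ^ 2)) := by
    rw [← hconst]
    refine setIntegral_mono_on
      (hint (((affine_contDiff p).continuous_fderiv (by simp)).norm.pow 2))
      (hint continuous_const) hKc.measurableSet fun x _ => ?_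
    have := norm_fderiv_p ha hlam hr hx₀ p c x
    have h2 : ‖fderiv ℝ (fun y => p y) x‖ ≤ 3 * ‖v‖ * (2 * ρ / h) := this.trans (by gcongr)
    calc _ ≤ (3 * ‖v‖ * (2 * ρ / h)) ^ 2 := by gcongr
      _ = _ := by ring
  have hB2 : ∫ x in K, (qq c (fun i => lam i x)) ^ 2 ≤ d * (V * (16 * ‖v‖ ^ 2)) := by
    rw [← hconst]
    refine setIntegral_mono_on (hint ((qq_contDiff c).continuous.pow 2))
      (hint continuous_const) hKc.measurableSet fun x hx => ?_
    rw [hK, hull_eq ha hlam] at hx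
    exact qq_abs_le v hx (lam_le_one ha hlam hx)
  -- lower bound
  have hucd : ContDiff ℝ 1 (fun y => p y + qq c (fun i => lam i y)) :=
    (affine_contDiff p).add (qq_contDiff c)
  have hL : d * (c₀ * ‖v‖ ^ 2) ≤
      3 * h ^ 2 * ∫ x in K, ‖fderiv ℝ (fun y => p y + qq c (fun i => lam i y)) x‖ ^ 2 := by
    calc d * (c₀ * ‖v‖ ^ 2) ≤ d * N v := by gcongr; exact hN v
      _ = ∫ x in K, S v (fun i => lam i x) := by
        rw [hK, integral_hull ha hlam]
        simp only [lam_Phi hlam]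
        rfl
      _ ≤ ∫ x in K, 3 * h ^ 2 * ‖fderiv ℝ (fun y => p y + qq c (fun i => lam i y)) x‖ ^ 2 := by
        refine setIntegral_mono_on (hint ?_)
          (hint (((hucd.continuous_fderiv (by simp)).norm.pow 2).const_mul _))
          hKc.measurableSet fun x _ => ?_
        · exact continuous_S.comp (continuous_const.prodMk
            (continuous_pi fun i => (affine_contDiff (lam i)).continuous))
        · have key : ∀ j, G v (fun i => lam i x) j ^ 2 ≤
              h ^ 2 * ‖fderiv ℝ (fun y => p y + qq c (fun i => lam i y)) x‖ ^ 2 := by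
            intro j
            rw [← fderiv_edge hlam p c x j, ← mul_pow, ← sq_abs]
            gcongr
            rw [mul_comm]
            exact ((fderiv ℝ (fun y => p y + qq c (fun i => lam i y)) x).le_opNorm
              (a j.succ - a 0)).trans
              (mul_le_mul_of_nonneg_left (hedge j.succ 0) (norm_nonneg _))
          have k0 := key 0
          have k1 := key 1
          have k2 := key 2
          unfold S
          linarith
      _ = _ := by rw [integral_const_mul]
  exact final_arith hd0 hc₀.le hV0 hpos hB1 hB2 hL
end
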